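/- Let p = 2m be a positive even integer, H a complex Hilbert space with grading operator ε, and F bounded with F² = 1 and Fε = −εF. Let A be a ℂ-algebra, ρ : A → B(H) a homomorphism into even operators with [F,ρ(a)] = Fρ(a) − ρ(a)F p-Schatten for all a ∈ A, and let δ : A → B(H) be a linear map into even operators satisfying δ(ab) = ρ(a)δ(b) + δ(a)ρ(b) for all a, b ∈ A. Then the (p+2)-linear functional φ on A defined by φ(a₀, a₁, …, a_{p+1}) = Σ_{k=1}^{p+1} (−1)^{k−1} Trace(ε ρ(a₀)[F,ρ(a₁)]⋯[F,ρ(a_{k−1})] δ(a_k) [F,ρ(a_{k+1})]⋯[F,ρ(a_{p+1})]) is well defined (each operator inside Trace is trace class) and is a Hochschild cocycle: bφ = 0. -/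

import Mathlib

open scoped ENNReal

noncomputable section

variable {H : Type*} [NormedAddCommGroup H] [InnerProductSpace ℂ H] [CompleteSpace H]
variable {A : Type*} [NonUnitalRing A] [Module ℂ A] [SMulCommClass ℂ A A] [IsScalarTower ℂ A A]

/-- The `n`-th singular value of a (compact) operator `T` (approximation numbers). -/
def sval (T : H →L[ℂ] H) (n : ℕ) : ℝ :=
  sInf {c : ℝ | ∃ R : H →L[ℂ] H,
    Module.rank ℂ (LinearMap.range (R : H →ₗ[ℂ] H)) ≤ (n : Cardinal) ∧ c = ‖T - R‖}

/-- The `p`-Schatten norm `‖T‖_p = (Σ_n s_n(T)^p)^(1/p)`, valued in `ℝ≥0∞`. -/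
def schattenNorm (p : ℝ) (T : H →L[ℂ] H) : ℝ≥0∞ :=
  (∑' n : ℕ, ENNReal.ofReal (sval T n ^ p)) ^ (1 / p)

/-- `T` is a `p`-Schatten operator: compact with finite `p`-Schatten norm. -/
def MemSchatten (p : ℝ) (T : H →L[ℂ] H) : Prop :=
  IsCompactOperator (⇑T) ∧ schattenNorm p T < ⊤

/-- The trace of an operator, computed in a (choice of) Hilbert basis of `H`. -/
def opTrace (T : H →L[ℂ] H) : ℂ :=
  ∑' i : (exists_hilbertBasis ℂ H).choose,
    @inner ℂ H _ ((exists_hilbertBasis ℂ H).choose_spec.choose i)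
      (T ((exists_hilbertBasis ℂ H).choose_spec.choose i))

/-- The commutator `[F, T] = FT - TF`. -/
def commOp (F T : H →L[ℂ] H) : H →L[ℂ] H := F * T - T * F

/-- The ordered product `f s * f (s+1) * ⋯ * f (s+k-1)` of operators. -/
def opList (f : ℕ → H →L[ℂ] H) (s k : ℕ) : H →L[ℂ] H := ((List.range' s k).map f).prod

/-- Cyclic indexing of a tuple by natural numbers. -/
def natIdx {A : Type*} {m : ℕ} (a : Fin (m + 1) → A) (k : ℕ) : A :=
  a ⟨k % (m + 1), Nat.mod_lt _ (Nat.succ_pos m)⟩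

/-- The Hochschild coboundary `b` on `(k+1)`-linear functionals. -/
def hochB {A : Type*} [Mul A] (k : ℕ) (ψ : (Fin (k + 1) → A) → ℂ) :
    (Fin (k + 2) → A) → ℂ := fun a =>
  (∑ i : Fin (k + 1), (-1 : ℂ) ^ (i : ℕ) *
    ψ (fun j => if (j : ℕ) < (i : ℕ) then a j.castSucc
        else if (j : ℕ) = (i : ℕ) then a j.castSucc * a j.succ
        else a j.succ)) +
  (-1 : ℂ) ^ (k + 1) * ψ (fun j => if (j : ℕ) = 0 then a (Fin.last (k + 1)) * a 0
    else a j.castSucc)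

/-- The operator `ε ρ(a₀)[F,ρ(a₁)]⋯[F,ρ(a_{k-1})] δ(a_k) [F,ρ(a_{k+1})]⋯[F,ρ(a_{p+1})]`. -/
def phiDeltaOp (ρf δf : A → H →L[ℂ] H) (ε F : H →L[ℂ] H) (p : ℕ)
    (a : Fin (p + 2) → A) (k : ℕ) : H →L[ℂ] H :=
  ε * ρf (natIdx (m := p + 1) a 0) *
    opList (fun i => commOp F (ρf (natIdx (m := p + 1) a i))) 1 (k - 1) *
    δf (natIdx (m := p + 1) a k) *
    opList (fun i => commOp F (ρf (natIdx (m := p + 1) a i))) (k + 1) (p + 1 - k)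

/-- The `(p+2)`-linear functional
`φ(a₀,…,a_{p+1}) = Σ_{k=1}^{p+1} (-1)^{k-1} Trace(ε ρ(a₀)[F,ρ(a₁)]⋯δ(a_k)⋯[F,ρ(a_{p+1})])`. -/
def phiDelta (ρf δf : A → H →L[ℂ] H) (ε F : H →L[ℂ] H) (p : ℕ)
    (a : Fin (p + 2) → A) : ℂ :=
  ∑ k ∈ Finset.Icc 1 (p + 1), (-1 : ℂ) ^ (k - 1) * opTrace (phiDeltaOp ρf δf ε F p a k)

/-!
For each position `k`, the operator in the `k`-th summand of `φ` is `ε ρ(a₀) D₁(a₁) ⋯ Dₙ(aₙ)`,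
where `D_k = δ` and all other `D_j` are `[F, ρ(·)]`; all of these are derivations along `ρ`. By
the Leibniz rule the alternating sum over the inner Hochschild faces telescopes to `± ε ρ(a₀)
D₁(a₁) ⋯ Dₙ(aₙ) ρ(aₙ₊₁)`. Since `ε` commutes with `ρ(aₙ₊₁)` and the trace is cyclic, this cancels
the trace of the remaining face, which starts with `ε ρ(aₙ₊₁ a₀)`. So every summand of `φ` is
itself a cocycle.

The traces exist by Hölder's inequality for approximation numbers, as each summand contains `p`
commutators. Cyclicity holds because an operator with summable approximation numbers is an
absolutely convergent series of rank-one operators: telescope approximations of rank `2 ^ k`,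
whose weighted errors `2 ^ k s_{2 ^ k}` are summable by Cauchy condensation.
-/

open Filter InnerProductSpace

section ApproximationNumbers

variable {E : Type*} [NormedAddCommGroup E] [InnerProductSpace ℂ E]

lemma sval_nonneg (T : E →L[ℂ] E) (n : ℕ) : 0 ≤ sval T n := by
  apply Real.sInf_nonneg
  rintro _ ⟨R, -, rfl⟩
  exact norm_nonneg _

lemma sval_le_norm_sub {T R : E →L[ℂ] E} {n : ℕ} (hR : LinearMap.rank (R : E →ₗ[ℂ] E) ≤ n) :
    sval T n ≤ ‖T - R‖ := by
  refine csInf_le ⟨0, ?_⟩ ⟨R, hR, rfl⟩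
  rintro _ ⟨R, -, rfl⟩
  exact norm_nonneg _

lemma sval_le_norm (T : E →L[ℂ] E) (n : ℕ) : sval T n ≤ ‖T‖ := by
  simpa using sval_le_norm_sub (T := T) (R := 0) (n := n) (by simp [LinearMap.rank_zero])

lemma exists_rank_le_norm_sub_lt (T : E →L[ℂ] E) {n : ℕ} {c : ℝ} (hc : sval T n < c) :
    ∃ R : E →L[ℂ] E, LinearMap.rank (R : E →ₗ[ℂ] E) ≤ n ∧ ‖T - R‖ < c := by
  obtain ⟨_, ⟨R, hR, rfl⟩, hlt⟩ := exists_lt_of_csInf_lt (by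
    exact ⟨‖T - 0‖, 0, by simp, rfl⟩) hc
  exact ⟨R, hR, hlt⟩

lemma sval_antitone (T : E →L[ℂ] E) : Antitone (sval T) := by
  refine fun m n hmn ↦ le_of_forall_gt fun c hc ↦ ?_
  obtain ⟨R, hR, hlt⟩ := exists_rank_le_norm_sub_lt T hc
  exact (sval_le_norm_sub (hR.trans (by exact_mod_cast hmn))).trans_lt hlt

lemma sval_mul_add_le (S T : E →L[ℂ] E) (m n : ℕ) :
    sval (S * T) (m + n) ≤ sval S m * sval T n := by
  refine le_mul_of_forall_lt₀ fun c hc d hd ↦ ?_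
  obtain ⟨P, hP, hSP⟩ := exists_rank_le_norm_sub_lt S hc
  obtain ⟨Q, hQ, hTQ⟩ := exists_rank_le_norm_sub_lt T hd
  have hrank : LinearMap.rank ((P * T + (S - P) * Q : E →L[ℂ] E) : E →ₗ[ℂ] E) ≤ (m + n : ℕ) := by
    push_cast
    exact (LinearMap.rank_add_le _ _).trans <| add_le_add
      ((LinearMap.rank_comp_le_left _ _).trans hP) ((LinearMap.rank_comp_le_right _ _).trans hQ)
  calc sval (S * T) (m + n) ≤ ‖S * T - (P * T + (S - P) * Q)‖ := sval_le_norm_sub hrank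
    _ = ‖(S - P) * (T - Q)‖ := by congr 1; noncomm_ring
    _ ≤ ‖S - P‖ * ‖T - Q‖ := norm_mul_le _ _
    _ ≤ c * d := mul_le_mul hSP.le hTQ.le (norm_nonneg _) ((norm_nonneg _).trans hSP.le)

lemma sval_mul_le_norm_mul (S T : E →L[ℂ] E) (n : ℕ) : sval (S * T) n ≤ ‖S‖ * sval T n := by
  have h := sval_mul_add_le S T 0 n
  rw [zero_add] at h
  exact h.trans (mul_le_mul_of_nonneg_right (sval_le_norm S 0) (sval_nonneg T n))

lemma sval_mul_le_mul_norm (S T : E →L[ℂ] E) (n : ℕ) : sval (S * T) n ≤ sval S n * ‖T‖ :=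
  (sval_mul_add_le S T n 0).trans (mul_le_mul_of_nonneg_left (sval_le_norm T 0) (sval_nonneg S n))

lemma exists_dyadic_approximation {T : E →L[ℂ] E} (hT : Summable (sval T)) :
    ∃ R : ℕ → E →L[ℂ] E, R 0 = 0 ∧ (∀ k, LinearMap.rank (R k : E →ₗ[ℂ] E) ≤ (2 ^ k : ℕ)) ∧
      Summable fun k ↦ (2 : ℝ) ^ k * ‖T - R k‖ := by
  choose Q hQrank hQ using fun k : ℕ ↦ exists_rank_le_norm_sub_lt T (n := 2 ^ k)
    (lt_add_of_pos_right _ (show (0 : ℝ) < (1 / 4) ^ k by positivity))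
  refine ⟨fun | 0 => 0 | k + 1 => Q k, rfl, ?_, (summable_nat_add_iff 1).1 ?_⟩
  · rintro (_ | k)
    · simp [LinearMap.rank_zero]
    · exact (hQrank k).trans (by gcongr <;> simp)
  · have hcondensed : Summable fun k ↦ (2 : ℝ) ^ k * sval T (2 ^ k) :=
      (summable_condensed_iff_of_nonneg (sval_nonneg T) fun _ _ _ h ↦ sval_antitone T h).2 hT
    refine .of_nonneg_of_le (fun k ↦ by positivity) (fun k ↦ ?_)
      ((hcondensed.add summable_geometric_two).mul_left 2)
    calc (2 : ℝ) ^ (k + 1) * ‖T - Q k‖ ≤ 2 ^ (k + 1) * (sval T (2 ^ k) + (1 / 4) ^ k) := by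
          gcongr; exact (hQ k).le
      _ = 2 * (2 ^ k * sval T (2 ^ k) + (2 * (1 / 4)) ^ k) := by rw [mul_pow]; ring
      _ = 2 * (2 ^ k * sval T (2 ^ k) + (1 / 2) ^ k) := by norm_num

end ApproximationNumbers

section Schatten

variable {E : Type*} [NormedAddCommGroup E] [InnerProductSpace ℂ E] {S T : E →L[ℂ] E}

lemma memSchatten_iff_summable {p : ℝ} (hp : 0 < p) :
    MemSchatten p T ↔ IsCompactOperator T ∧ Summable fun n ↦ sval T n ^ p := by
  have hnonneg (n : ℕ) : 0 ≤ sval T n ^ p := Real.rpow_nonneg (sval_nonneg T n) p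
  rw [MemSchatten, schattenNorm, ENNReal.rpow_lt_top_iff_of_pos (by positivity), lt_top_iff_ne_top]
  refine and_congr_right fun _ ↦ ⟨fun h ↦ ?_, fun h ↦ h.tsum_ofReal_ne_top⟩
  simpa only [ENNReal.toReal_ofReal (hnonneg _)] using ENNReal.summable_toReal h

lemma MemSchatten.summable_sval (hT : MemSchatten 1 T) : Summable (sval T) := by
  simpa using ((memSchatten_iff_summable one_pos).1 hT).2

lemma MemSchatten.mul_left {p : ℝ} (hp : 0 < p) (hT : MemSchatten p T) (S : E →L[ℂ] E) :
    MemSchatten p (S * T) := by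
  rw [memSchatten_iff_summable hp] at hT ⊢
  refine ⟨hT.1.clm_comp S, .of_nonneg_of_le (fun n ↦ Real.rpow_nonneg (sval_nonneg _ n) p)
    (fun n ↦ ?_) (hT.2.mul_left (‖S‖ ^ p))⟩
  rw [← Real.mul_rpow (norm_nonneg S) (sval_nonneg T n)]
  exact Real.rpow_le_rpow (sval_nonneg _ n) (sval_mul_le_norm_mul S T n) hp.le

lemma MemSchatten.mul_right {p : ℝ} (hp : 0 < p) (hS : MemSchatten p S) (T : E →L[ℂ] E) :
    MemSchatten p (S * T) := by
  rw [memSchatten_iff_summable hp] at hS ⊢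
  refine ⟨hS.1.comp_clm T, .of_nonneg_of_le (fun n ↦ Real.rpow_nonneg (sval_nonneg _ n) p)
    (fun n ↦ ?_) (hS.2.mul_right (‖T‖ ^ p))⟩
  rw [← Real.mul_rpow (sval_nonneg S n) (norm_nonneg T)]
  exact Real.rpow_le_rpow (sval_nonneg _ n) (sval_mul_le_mul_norm S T n) hp.le

lemma summable_of_antitone_of_summable_two_mul {f : ℕ → ℝ} (hf : Antitone f) (hf0 : ∀ n, 0 ≤ f n)
    (h : Summable fun n ↦ f (2 * n)) : Summable f :=
  h.even_add_odd <| .of_nonneg_of_le (fun _ ↦ hf0 _) (fun _ ↦ hf (Nat.le_succ _)) h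

theorem MemSchatten.mul {p q r : ℝ} (hpqr : p.HolderTriple q r) (hS : MemSchatten p S)
    (hT : MemSchatten q T) : MemSchatten r (S * T) := by
  have hr := hpqr.pos'
  rw [memSchatten_iff_summable hpqr.pos] at hS
  rw [memSchatten_iff_summable hpqr.symm.pos] at hT
  rw [memSchatten_iff_summable hr]
  have hrpow (R : E →L[ℂ] E) (n : ℕ) : 0 ≤ sval R n ^ r := Real.rpow_nonneg (sval_nonneg R n) r
  have hrpow_div (R : E →L[ℂ] E) (s : ℝ) (n : ℕ) : (sval R n ^ r) ^ (s / r) = sval R n ^ s := by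
    rw [← Real.rpow_mul (sval_nonneg R n), mul_div_cancel₀ _ hr.ne']
  have hholder : Summable fun n ↦ sval S n ^ r * sval T n ^ r :=
    Real.summable_mul_of_Lp_Lq_of_nonneg hpqr.holderConjugate_div_div (hrpow S) (hrpow T)
      (by simpa only [hrpow_div] using hS.2) (by simpa only [hrpow_div] using hT.2)
  refine ⟨hS.1.comp_clm T, summable_of_antitone_of_summable_two_mul
    (fun m n hmn ↦ Real.rpow_le_rpow (sval_nonneg _ n) (sval_antitone _ hmn) hr.le)
    (hrpow _) (.of_nonneg_of_le (fun n ↦ hrpow _ _) (fun n ↦ ?_) hholder)⟩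
  rw [two_mul, ← Real.mul_rpow (sval_nonneg S n) (sval_nonneg T n)]
  exact Real.rpow_le_rpow (sval_nonneg _ _) (sval_mul_add_le S T n n) hr.le

/-- `T` is as small as a product of bounded operators `n` of which are `p`-Schatten, that is, `T`
lies in the Schatten class of exponent `p / n`; for `n = 0`, where that exponent is infinite, every
bounded `T` qualifies. -/
def HasSchattenOrder (p : ℝ) (n : ℕ) (T : E →L[ℂ] E) : Prop := n ≠ 0 → MemSchatten (p / n) T

lemma hasSchattenOrder_zero (p : ℝ) (T : E →L[ℂ] E) : HasSchattenOrder p 0 T :=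
  fun h ↦ absurd rfl h

lemma hasSchattenOrder_one {p : ℝ} : HasSchattenOrder p 1 T ↔ MemSchatten p T := by
  simp [HasSchattenOrder]

lemma HasSchattenOrder.mul {p : ℝ} (hp : 0 < p) {m n : ℕ} (hS : HasSchattenOrder p m S)
    (hT : HasSchattenOrder p n T) : HasSchattenOrder p (m + n) (S * T) := by
  intro hmn
  have hpos {k : ℕ} (hk : k ≠ 0) : 0 < p / k := by positivity
  rcases eq_or_ne m 0 with rfl | hm
  · rw [zero_add] at hmn ⊢
    exact (hT hmn).mul_left (hpos hmn) S
  rcases eq_or_ne n 0 with rfl | hn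
  · exact (hS hm).mul_right (hpos hm) T
  · exact (hS hm).mul ⟨by push_cast; field_simp, hpos hm, hpos hn⟩ (hT hn)

lemma hasSchattenOrder_opList {p : ℝ} (hp : 0 < p) {f : ℕ → E →L[ℂ] E}
    (hf : ∀ i, MemSchatten p (f i)) (s n : ℕ) : HasSchattenOrder p n (opList f s n) := by
  induction n with
  | zero => exact hasSchattenOrder_zero p _
  | succ n ih =>
    rw [opList, List.range'_concat, List.map_append, List.prod_append]
    simpa [opList] using ih.mul hp (hasSchattenOrder_one.2 (hf (s + n)))

lemma hasSchattenOrder_phiDeltaOp {M : Type*} {p : ℝ} (hp : 0 < p) {ρ : M → E →L[ℂ] E}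
    (δ : M → E →L[ℂ] E) (ε : E →L[ℂ] E) {F : E →L[ℂ] E} (hS : ∀ a, MemSchatten p (commOp F (ρ a)))
    {n : ℕ} (a : Fin (n + 2) → M) {k : ℕ} (hk : 1 ≤ k) (hkn : k ≤ n + 1) :
    HasSchattenOrder p n (phiDeltaOp ρ δ ε F n a k) := by
  have hcomm := hasSchattenOrder_opList hp fun i ↦ hS (natIdx (m := n + 1) a i)
  have h := (((hasSchattenOrder_zero p (ε * ρ (natIdx (m := n + 1) a 0))).mul hp
    (hcomm 1 (k - 1))).mul hp (hasSchattenOrder_zero p (δ (natIdx (m := n + 1) a k)))).mul hp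
    (hcomm (k + 1) (n + 1 - k))
  rwa [show 0 + (k - 1) + 0 + (n + 1 - k) = n by omega] at h

end Schatten

section Nuclear

variable {𝕜 E : Type*} [RCLike 𝕜] [NormedAddCommGroup E] [InnerProductSpace 𝕜 E]

/-- `T = ∑ i, ⟪u i, ·⟫ v i` is a nuclear representation of `T`: the series of rank-one operators
converges absolutely in the operator norm. -/
structure IsNuclearRep {ι : Type*} (u v : ι → E) (T : E →L[𝕜] E) : Prop where
  summable_norm : Summable fun i ↦ ‖v i‖ * ‖u i‖
  hasSum : HasSum (fun i ↦ rankOne 𝕜 (v i) (u i)) T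

lemma IsNuclearRep.mul_left {ι : Type*} {u v : ι → E} {T : E →L[𝕜] E} (h : IsNuclearRep u v T)
    (B : E →L[𝕜] E) : IsNuclearRep u (fun i ↦ B (v i)) (B * T) where
  summable_norm := by
    refine .of_nonneg_of_le (fun i ↦ by positivity) (fun i ↦ ?_) (h.summable_norm.mul_left ‖B‖)
    rw [← mul_assoc]
    gcongr
    exact B.le_opNorm _
  hasSum := by
    simpa only [ContinuousLinearMap.mul_def, comp_rankOne] using h.hasSum.mul_left B

lemma IsNuclearRep.mul_right [CompleteSpace E] {ι : Type*} {u v : ι → E} {T : E →L[𝕜] E}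
    (h : IsNuclearRep u v T) (B : E →L[𝕜] E) :
    IsNuclearRep (fun i ↦ B.adjoint (u i)) v (T * B) where
  summable_norm := by
    refine .of_nonneg_of_le (fun i ↦ by positivity) (fun i ↦ ?_) (h.summable_norm.mul_right ‖B‖)
    rw [mul_assoc, mul_comm ‖u i‖, ← LinearIsometryEquiv.norm_map ContinuousLinearMap.adjoint B]
    gcongr
    exact B.adjoint.le_opNorm _
  hasSum := by
    simpa only [ContinuousLinearMap.mul_def, rankOne_comp] using h.hasSum.mul_right B

lemma sum_norm_inner_mul_inner_le {κ : Type*} {b : κ → E} (hb : Orthonormal 𝕜 b) (x y : E)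
    (s : Finset κ) : ∑ i ∈ s, ‖inner 𝕜 x (b i) * inner 𝕜 (b i) y‖ ≤ ‖x‖ * ‖y‖ :=
  calc ∑ i ∈ s, ‖inner 𝕜 x (b i) * inner 𝕜 (b i) y‖
      = ∑ i ∈ s, ‖inner 𝕜 (b i) x‖ * ‖inner 𝕜 (b i) y‖ := by
        simp only [norm_mul, norm_inner_symm x]
    _ ≤ √(∑ i ∈ s, ‖inner 𝕜 (b i) x‖ ^ 2) * √(∑ i ∈ s, ‖inner 𝕜 (b i) y‖ ^ 2) :=
        Real.sum_mul_le_sqrt_mul_sqrt s _ _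
    _ ≤ ‖x‖ * ‖y‖ := by
        gcongr <;> exact (Real.sqrt_le_left (norm_nonneg _)).2 (hb.sum_inner_products_le _)

lemma IsNuclearRep.summable_inner_mul_inner {ι κ : Type*} {b : κ → E} (hb : Orthonormal 𝕜 b)
    {u v : ι → E} {T : E →L[𝕜] E} (h : IsNuclearRep u v T) :
    Summable fun z : ι × κ ↦ inner 𝕜 (u z.1) (b z.2) * inner 𝕜 (b z.2) (v z.1) := by
  have hle (n : ι) := sum_norm_inner_mul_inner_le hb (u n) (v n)
  refine .of_norm ((summable_prod_of_nonneg fun z ↦ norm_nonneg _).2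
    ⟨fun n ↦ summable_of_sum_le (fun _ ↦ norm_nonneg _) (hle n),
      .of_nonneg_of_le (fun n ↦ tsum_nonneg fun _ ↦ norm_nonneg _) (fun n ↦ ?_) h.summable_norm⟩)
  exact (Real.tsum_le_of_sum_le (fun _ ↦ norm_nonneg _) (hle n)).trans_eq (mul_comm _ _)

theorem IsNuclearRep.hasSum_inner_apply {ι κ : Type*} (b : HilbertBasis κ 𝕜 E) {u v : ι → E}
    {T : E →L[𝕜] E} (h : IsNuclearRep u v T) :
    HasSum (fun i ↦ inner 𝕜 (b i) (T (b i))) (∑' n, inner 𝕜 (u n) (v n)) := by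
  have hdouble := (h.summable_inner_mul_inner b.orthonormal).hasSum
  have hrow := hdouble.prod_fiberwise fun n ↦ b.hasSum_inner_mul_inner (u n) (v n)
  rw [hrow.tsum_eq]
  refine ((Equiv.prodComm κ ι).hasSum_iff.2 hdouble).prod_fiberwise fun i ↦ ?_
  have hT := h.hasSum.mapL (innerSL 𝕜 (b i) ∘L ContinuousLinearMap.apply 𝕜 E (b i))
  simpa [inner_smul_right] using hT

lemma exists_eq_sum_rankOne_of_rank_le [CompleteSpace E] {R : E →L[𝕜] E} {r : ℕ}
    (hR : LinearMap.rank (R : E →ₗ[𝕜] E) ≤ r) :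
    ∃ d ≤ r, ∃ u v : Fin d → E,
      (∀ j, ‖v j‖ * ‖u j‖ ≤ ‖R‖) ∧ R = ∑ j, rankOne 𝕜 (v j) (u j) := by
  let V := LinearMap.range (R : E →ₗ[𝕜] E)
  have : FiniteDimensional 𝕜 V :=
    Module.rank_lt_aleph0_iff.1 (hR.trans_lt Cardinal.natCast_lt_aleph0)
  let b := stdOrthonormalBasis 𝕜 V
  refine ⟨_, Module.finrank_le_of_rank_le hR, fun j ↦ R.adjoint (b j), fun j ↦ b j,
    fun j ↦ ?_, ?_⟩
  · have hb : ‖(b j : E)‖ = 1 := b.norm_eq_one j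
    simpa [hb] using R.adjoint.le_opNorm (b j)
  · have hproj : R = V.starProjection ∘L R := by
      ext x
      exact (Submodule.starProjection_eq_self_iff.2 (LinearMap.mem_range_self _ x)).symm
    calc R = V.starProjection ∘L R := hproj
      _ = ∑ j, rankOne 𝕜 (b j : E) (R.adjoint (b j)) := by
        simp only [b.starProjection_eq_sum_rankOne, ContinuousLinearMap.finsetSum_comp,
          rankOne_comp]

theorem exists_isNuclearRep_of_hasSum [CompleteSpace E] {R : ℕ → E →L[𝕜] E} {T : E →L[𝕜] E}
    {r : ℕ → ℕ} (hr : ∀ k, LinearMap.rank (R k : E →ₗ[𝕜] E) ≤ r k)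
    (hsum : Summable fun k ↦ r k * ‖R k‖) (hT : HasSum R T) :
    ∃ (ι : Type) (u v : ι → E), IsNuclearRep u v T := by
  choose d hd u v huv hR using fun k ↦ exists_eq_sum_rankOne_of_rank_le (hr k)
  have hnorm : Summable fun i : Σ k, Fin (d k) ↦ ‖v i.1 i.2‖ * ‖u i.1 i.2‖ := by
    refine (summable_sigma_of_nonneg fun i ↦ by positivity).2
      ⟨fun k ↦ .of_finite, .of_nonneg_of_le (fun k ↦ tsum_nonneg fun _ ↦ by positivity)
        (fun k ↦ ?_) hsum⟩
    calc ∑' j, ‖v k j‖ * ‖u k j‖ = ∑ j, ‖v k j‖ * ‖u k j‖ := tsum_fintype _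
      _ ≤ ∑ _j : Fin (d k), ‖R k‖ := Finset.sum_le_sum fun j _ ↦ huv k j
      _ = d k * ‖R k‖ := by simp
      _ ≤ r k * ‖R k‖ := by gcongr; exact hd k
  have hseries : Summable fun i : Σ k, Fin (d k) ↦ rankOne 𝕜 (v i.1 i.2) (u i.1 i.2) :=
    .of_norm (by simpa only [norm_rankOne] using hnorm)
  refine ⟨_, _, _, hnorm, ?_⟩
  have hsigma := hseries.hasSum.sigma (g := R) fun k ↦ hR k ▸ hasSum_fintype _
  exact hsigma.unique hT ▸ hseries.hasSum

end Nuclear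

section Trace

variable {T : H →L[ℂ] H}

theorem MemSchatten.exists_isNuclearRep (hT : MemSchatten 1 T) :
    ∃ (ι : Type) (u v : ι → H), IsNuclearRep u v T := by
  obtain ⟨R, hR0, hRrank, hR⟩ := exists_dyadic_approximation hT.summable_sval
  have hnorm (k : ℕ) : ‖R (k + 1) - R k‖ ≤ ‖T - R k‖ + ‖T - R (k + 1)‖ := by
    rw [← sub_sub_sub_cancel_left _ _ T]
    exact norm_sub_le _ _
  have hrank (k : ℕ) : LinearMap.rank ((R (k + 1) - R k : H →L[ℂ] H) : H →ₗ[ℂ] H) ≤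
      (2 ^ (k + 1) + 2 ^ k : ℕ) := by
    rw [ContinuousLinearMap.toLinearMap_sub, sub_eq_add_neg, Nat.cast_add]
    refine (LinearMap.rank_add_le _ _).trans (add_le_add (hRrank (k + 1)) ?_)
    rw [LinearMap.rank, LinearMap.range_neg]
    exact hRrank k
  have hsum : Summable fun k ↦ ((2 ^ (k + 1) + 2 ^ k : ℕ) : ℝ) * ‖R (k + 1) - R k‖ := by
    refine .of_nonneg_of_le (fun k ↦ by positivity) (fun k ↦ ?_)
      ((hR.mul_left 3).add (((summable_nat_add_iff 1).2 hR).mul_left (3 / 2)))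
    calc ((2 ^ (k + 1) + 2 ^ k : ℕ) : ℝ) * ‖R (k + 1) - R k‖
        ≤ (2 ^ (k + 1) + 2 ^ k : ℕ) * (‖T - R k‖ + ‖T - R (k + 1)‖) := by gcongr; exact hnorm k
      _ = 3 * (2 ^ k * ‖T - R k‖) + 3 / 2 * (2 ^ (k + 1) * ‖T - R (k + 1)‖) := by push_cast; ring
  refine exists_isNuclearRep_of_hasSum hrank hsum ?_
  have hsummable : Summable fun k ↦ ‖R (k + 1) - R k‖ := by
    refine .of_nonneg_of_le (fun k ↦ norm_nonneg _) (fun k ↦ ?_) hsum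
    refine le_mul_of_one_le_left (norm_nonneg _) ?_
    exact_mod_cast Nat.one_le_two_pow.trans (Nat.le_add_left _ _)
  have hlim : Tendsto (fun k ↦ ‖T - R k‖) atTop (nhds 0) := by
    refine squeeze_zero (fun k ↦ norm_nonneg _) (fun k ↦ ?_) hR.tendsto_atTop_zero
    exact le_mul_of_one_le_left (norm_nonneg _) (one_le_pow₀ one_le_two)
  rw [hasSum_iff_tendsto_nat_of_summable_norm hsummable, tendsto_iff_norm_sub_tendsto_zero]
  simpa only [Finset.sum_range_sub, hR0, sub_zero, norm_sub_rev _ T] using hlim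

lemma MemSchatten.summable_inner_apply {κ : Type*} (hT : MemSchatten 1 T) (b : HilbertBasis κ ℂ H) :
    Summable fun i ↦ inner ℂ (b i) (T (b i)) := by
  obtain ⟨_, _, _, h⟩ := hT.exists_isNuclearRep
  exact (h.hasSum_inner_apply b).summable

lemma IsNuclearRep.opTrace_eq {ι : Type*} {u v : ι → H} (h : IsNuclearRep u v T) :
    opTrace T = ∑' i, inner ℂ (u i) (v i) :=
  (h.hasSum_inner_apply _).tsum_eq

theorem opTrace_mul_comm (hT : MemSchatten 1 T) (B : H →L[ℂ] H) :
    opTrace (B * T) = opTrace (T * B) := by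
  obtain ⟨ι, u, v, h⟩ := hT.exists_isNuclearRep
  rw [(h.mul_left B).opTrace_eq, (h.mul_right B).opTrace_eq]
  simp only [ContinuousLinearMap.adjoint_inner_left]

lemma opTrace_sum_smul {ι : Type*} (s : Finset ι) (c : ι → ℂ) {T : ι → H →L[ℂ] H}
    (hT : ∀ i ∈ s, MemSchatten 1 (T i)) :
    opTrace (∑ i ∈ s, c i • T i) = ∑ i ∈ s, c i * opTrace (T i) := by
  simp only [opTrace, ← tsum_mul_left]
  rw [← Summable.tsum_finsetSum fun i hi ↦ ((hT i hi).summable_inner_apply _).mul_left (c i)]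
  simp

lemma opTrace_smul (c : ℂ) (T : H →L[ℂ] H) : opTrace (c • T) = c * opTrace T := by
  simp [opTrace, tsum_mul_left]

end Trace

section DerivationProducts

variable {M R : Type*}

section Monoid

variable [Monoid R] (ρ : M → R) (D : ℕ → M → R)

/-- The product `ρ(a₀) D₁(a₁) ⋯ Dₙ(aₙ)` on the first `n + 1` entries of the sequence `a`; the
indexing of `D` starts at `1`. -/
def derivationProd (a : ℕ → M) (n : ℕ) : R :=
  ρ (a 0) * ((List.range' 1 n).map fun j ↦ D j (a j)).prod

lemma derivationProd_zero (a : ℕ → M) : derivationProd ρ D a 0 = ρ (a 0) := by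
  simp [derivationProd]

lemma derivationProd_succ (a : ℕ → M) (n : ℕ) :
    derivationProd ρ D a (n + 1) = derivationProd ρ D a n * D (n + 1) (a (n + 1)) := by
  simp [derivationProd, List.range'_concat, mul_assoc, add_comm 1 n]

lemma derivationProd_congr {a b : ℕ → M} {n : ℕ} (h : ∀ j ≤ n, a j = b j) :
    derivationProd ρ D a n = derivationProd ρ D b n := by
  induction n with
  | zero => simp only [derivationProd_zero, h 0 le_rfl]
  | succ n ih =>
    rw [derivationProd_succ, derivationProd_succ, ih fun j hj ↦ h j (hj.trans n.le_succ),
      h (n + 1) le_rfl]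

lemma derivationProd_of_mul_head [Mul M] {ρ : M → R} (hρ : ∀ a b, ρ (a * b) = ρ a * ρ b)
    {a b : ℕ → M} {c : M} {n : ℕ} (h0 : b 0 = c * a 0) (h : ∀ j ≤ n, j ≠ 0 → b j = a j) :
    derivationProd ρ D b n = ρ c * derivationProd ρ D a n := by
  induction n with
  | zero => simp only [derivationProd_zero, h0, hρ]
  | succ n ih =>
    rw [derivationProd_succ, derivationProd_succ, ih fun j hj ↦ h j (hj.trans n.le_succ),
      h (n + 1) le_rfl n.succ_ne_zero, mul_assoc]

end Monoid

variable [Mul M]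

/-- The face `(a₀, …, aᵢ₋₁, aᵢaᵢ₊₁, aᵢ₊₂, …)` of an infinite sequence. -/
def face (i : ℕ) (a : ℕ → M) (j : ℕ) : M :=
  if j < i then a j else if j = i then a j * a (j + 1) else a (j + 1)

lemma face_of_lt {i j : ℕ} (a : ℕ → M) (h : j < i) : face i a j = a j := if_pos h

lemma face_self (i : ℕ) (a : ℕ → M) : face i a i = a i * a (i + 1) := by simp [face]

lemma face_of_gt {i j : ℕ} (a : ℕ → M) (h : i < j) : face i a j = a (j + 1) := by
  rw [face, if_neg h.not_gt, if_neg h.ne']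

variable [Ring R]

/-- `D` is a derivation along `ρ`, that is, into `R` seen as an `M`-bimodule through `ρ`. As `M` is
only a multiplicative structure, the Leibniz rule is all that is asked. -/
def IsDerivationAlong (ρ D : M → R) : Prop := ∀ a b, D (a * b) = ρ a * D b + D a * ρ b

-- By the Leibniz rule the `i`-th face splits into two terms, the second of which cancels the first
-- term of the face `i + 1`; only the last one survives.
theorem sum_smul_derivationProd_face (S : Type*) [CommRing S] [Algebra S R] {ρ : M → R}
    {D : ℕ → M → R} (hρ : ∀ a b, ρ (a * b) = ρ a * ρ b) (hD : ∀ j, IsDerivationAlong ρ (D j))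
    (a : ℕ → M) (n : ℕ) :
    ∑ i ∈ Finset.range (n + 1), (-1 : S) ^ i • derivationProd ρ D (face i a) n =
      (-1 : S) ^ n • (derivationProd ρ D a n * ρ (a (n + 1))) := by
  induction n with
  | zero => simp [derivationProd_zero, face_self, hρ]
  | succ n ih =>
    have hinit : ∑ i ∈ Finset.range (n + 1),
          (-1 : S) ^ i • derivationProd ρ D (face i a) (n + 1) =
        (-1 : S) ^ n • (derivationProd ρ D a n * ρ (a (n + 1)) * D (n + 1) (a (n + 2))) := by
      rw [← smul_mul_assoc, ← ih, Finset.sum_mul]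
      refine Finset.sum_congr rfl fun i hi ↦ ?_
      rw [derivationProd_succ, face_of_gt a (Finset.mem_range.1 hi), smul_mul_assoc]
    have hlast : derivationProd ρ D (face (n + 1) a) (n + 1) =
        derivationProd ρ D a n * (ρ (a (n + 1)) * D (n + 1) (a (n + 2)) +
          D (n + 1) (a (n + 1)) * ρ (a (n + 2))) := by
      rw [derivationProd_succ, face_self, hD,
        derivationProd_congr ρ D fun j hj ↦ face_of_lt a (Nat.lt_succ_of_le hj)]
    rw [Finset.sum_range_succ, hinit, hlast, derivationProd_succ, pow_succ, mul_neg_one, neg_smul,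
      neg_smul, mul_add, smul_add, mul_assoc, mul_assoc]
    abel

end DerivationProducts

section Hochschild

lemma natIdx_of_lt {M : Type*} {n j : ℕ} (a : Fin (n + 1) → M) (hj : j < n + 1) :
    natIdx a j = a ⟨j, hj⟩ := by
  simp only [natIdx, Nat.mod_eq_of_lt hj]

lemma natIdx_contractNth {M : Type*} [Mul M] {n : ℕ} (i : Fin (n + 2)) (a : Fin (n + 2) → M) {j : ℕ}
    (hj : j ≤ n) : natIdx (Fin.contractNth i (· * ·) a) j = face i (natIdx a) j := by
  rw [face, natIdx_of_lt _ (by lia : j < n + 1), natIdx_of_lt _ (by lia : j < n + 1 + 1),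
    natIdx_of_lt _ (by lia : j + 1 < n + 1 + 1)]
  rfl

lemma hochB_sum_mul {M ι : Type*} [Mul M] {n : ℕ} (s : Finset ι) (c : ι → ℂ)
    (ψ : ι → (Fin (n + 1) → M) → ℂ) (a : Fin (n + 2) → M) :
    hochB n (fun b ↦ ∑ k ∈ s, c k * ψ k b) a = ∑ k ∈ s, c k * hochB n (ψ k) a := by
  simp only [hochB, Finset.mul_sum, mul_add, Finset.sum_add_distrib]
  rw [Finset.sum_comm]
  simp only [mul_left_comm]

lemma sum_smul_derivationProd_contractNth {M R : Type*} [Mul M] [Ring R] (S : Type*) [CommRing S]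
    [Algebra S R] {ρ : M → R} {D : ℕ → M → R} (hρ : ∀ a b, ρ (a * b) = ρ a * ρ b)
    (hD : ∀ j, IsDerivationAlong ρ (D j)) {n : ℕ} (a : Fin (n + 2) → M) :
    ∑ i : Fin (n + 1), (-1 : S) ^ (i : ℕ) •
        derivationProd ρ D (natIdx (Fin.contractNth i.castSucc (· * ·) a)) n =
      (-1 : S) ^ n • (derivationProd ρ D (natIdx a) n * ρ (natIdx a (n + 1))) := by
  rw [← sum_smul_derivationProd_face S hρ hD, Finset.sum_range]
  refine Finset.sum_congr rfl fun i _ ↦ ?_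
  rw [derivationProd_congr ρ D fun j hj ↦ natIdx_contractNth i.castSucc a hj, Fin.val_castSucc]

variable {M : Type*} [Mul M] {ρ : M → H →L[ℂ] H} {D : ℕ → M → H →L[ℂ] H} {ε : H →L[ℂ] H} {n : ℕ}

theorem hochB_opTrace_derivationProd (hρ : ∀ a b, ρ (a * b) = ρ a * ρ b)
    (hD : ∀ j, IsDerivationAlong ρ (D j)) (hε : ∀ a, Commute ε (ρ a))
    (htc : ∀ b : Fin (n + 1) → M, MemSchatten 1 (ε * derivationProd ρ D (natIdx b) n))
    (a : Fin (n + 2) → M) :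
    hochB n (fun b ↦ opTrace (ε * derivationProd ρ D (natIdx b) n)) a = 0 := by
  let P := ε * derivationProd ρ D (natIdx a) n
  let z := ρ (natIdx a (n + 1))
  let innerFace (i : Fin (n + 1)) : Fin (n + 1) → M := Fin.contractNth i.castSucc (· * ·) a
  let cyclicFace (j : Fin (n + 1)) : M :=
    if (j : ℕ) = 0 then a (Fin.last (n + 1)) * a 0 else a j.castSucc
  have hP : MemSchatten 1 P := by
    convert htc (Fin.init a) using 2
    refine derivationProd_congr ρ D fun j hj ↦ ?_
    rw [natIdx_of_lt _ (by lia : j < n + 2), natIdx_of_lt _ (by lia : j < n + 1)]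
    rfl
  have hinner : ∑ i : Fin (n + 1),
      (-1 : ℂ) ^ (i : ℕ) • (ε * derivationProd ρ D (natIdx (innerFace i)) n) =
        (-1 : ℂ) ^ n • (P * z) := by
    simp only [innerFace, ← mul_smul_comm, ← Finset.mul_sum,
      sum_smul_derivationProd_contractNth ℂ hρ hD, P, z, mul_assoc]
  have hcyclic : ε * derivationProd ρ D (natIdx cyclicFace) n = z * P := by
    have hhead : natIdx cyclicFace 0 = natIdx a (n + 1) * natIdx a 0 := by
      rw [natIdx_of_lt a (by lia : n + 1 < n + 2)]
      rfl
    have htail (j : ℕ) (hj : j ≤ n) (hj0 : j ≠ 0) : natIdx cyclicFace j = natIdx a j := by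
      rw [natIdx_of_lt _ (by lia : j < n + 1), natIdx_of_lt _ (by lia : j < n + 2)]
      exact if_neg hj0
    rw [derivationProd_of_mul_head D hρ hhead htail, (hε _).left_comm]
  calc hochB n (fun b ↦ opTrace (ε * derivationProd ρ D (natIdx b) n)) a
      = ∑ i : Fin (n + 1),
            (-1 : ℂ) ^ (i : ℕ) * opTrace (ε * derivationProd ρ D (natIdx (innerFace i)) n) +
          (-1 : ℂ) ^ (n + 1) * opTrace (ε * derivationProd ρ D (natIdx cyclicFace) n) := rfl
    _ = (-1 : ℂ) ^ n * opTrace (P * z) + (-1 : ℂ) ^ (n + 1) * opTrace (z * P) := by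
        rw [← opTrace_sum_smul _ _ fun i _ ↦ htc (innerFace i), hinner, hcyclic, opTrace_smul]
    _ = 0 := by rw [opTrace_mul_comm hP]; ring

end Hochschild

section PhiDelta

variable {E M : Type*} [NormedAddCommGroup E] [InnerProductSpace ℂ E]

lemma isDerivationAlong_commOp [Mul M] (F : E →L[ℂ] E) {ρ : M → E →L[ℂ] E}
    (hρ : ∀ a b, ρ (a * b) = ρ a * ρ b) : IsDerivationAlong ρ fun a ↦ commOp F (ρ a) := by
  intro a b
  simp only [commOp, hρ]
  noncomm_ring

/-- The `j`-th factor of the `k`-th summand of `φ`: `δ` at position `k`, and `[F, ρ(·)]` at all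
other positions. -/
def phiDeltaFactor (ρ δ : M → E →L[ℂ] E) (F : E →L[ℂ] E) (k j : ℕ) : M → E →L[ℂ] E :=
  if j = k then δ else fun a ↦ commOp F (ρ a)

lemma isDerivationAlong_phiDeltaFactor [Mul M] (F : E →L[ℂ] E) {ρ δ : M → E →L[ℂ] E}
    (hρ : ∀ a b, ρ (a * b) = ρ a * ρ b) (hδ : IsDerivationAlong ρ δ) (k j : ℕ) :
    IsDerivationAlong ρ (phiDeltaFactor ρ δ F k j) := by
  rw [phiDeltaFactor]
  split_ifs
  · exact hδ
  · exact isDerivationAlong_commOp F hρ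

lemma opList_eq_prod_phiDeltaFactor (ρ δ : M → E →L[ℂ] E) (F : E →L[ℂ] E) (a : ℕ → M) {k s l : ℕ}
    (hk : k < s ∨ s + l ≤ k) : opList (fun j ↦ commOp F (ρ (a j))) s l =
      ((List.range' s l).map fun j ↦ phiDeltaFactor ρ δ F k j (a j)).prod := by
  refine congrArg List.prod (List.map_congr_left fun j hj ↦ ?_)
  rw [List.mem_range'_1] at hj
  rw [phiDeltaFactor, if_neg (by lia)]

lemma phiDeltaOp_eq_mul_derivationProd (ρ δ : M → E →L[ℂ] E) (ε F : E →L[ℂ] E) {n : ℕ}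
    (a : Fin (n + 2) → M) {k : ℕ} (hk : 1 ≤ k) (hkn : k ≤ n + 1) :
    phiDeltaOp ρ δ ε F n a k =
      ε * derivationProd ρ (phiDeltaFactor ρ δ F k) (natIdx (m := n + 1) a) (n + 1) := by
  have hsplit : List.range' 1 (n + 1) =
      List.range' 1 (k - 1) ++ k :: List.range' (k + 1) (n + 1 - k) := by
    rw [← List.range'_succ, show n + 1 = (k - 1) + (n + 1 - k + 1) by lia,
      ← List.range'_append_1]
    congr 2 <;> lia
  rw [phiDeltaOp, derivationProd, hsplit, List.map_append, List.prod_append, List.map_cons,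
    List.prod_cons, opList_eq_prod_phiDeltaFactor ρ δ F _ (k := k) (by lia),
    opList_eq_prod_phiDeltaFactor ρ δ F _ (k := k) (by lia)]
  simp only [phiDeltaFactor, if_true, mul_assoc]

end PhiDelta

theorem phiDelta_hochschild_cocycle_general {M : Type*} [Mul M] {p : ℕ} (hp : 0 < p)
    (ε F : H →L[ℂ] H) {ρ δ : M → H →L[ℂ] H} (hρ : ∀ a b, ρ (a * b) = ρ a * ρ b)
    (heven : ∀ a, Commute ε (ρ a)) (hS : ∀ a, MemSchatten p (commOp F (ρ a)))
    (hδ : IsDerivationAlong ρ δ) :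
    (∀ a : Fin (p + 2) → M, ∀ k : ℕ, 1 ≤ k → k ≤ p + 1 →
      MemSchatten 1 (phiDeltaOp ρ δ ε F p a k)) ∧
    (∀ a : Fin (p + 3) → M, hochB (p + 1) (phiDelta ρ δ ε F p) a = 0) := by
  have htc (a : Fin (p + 2) → M) (k : ℕ) (hk : 1 ≤ k) (hkp : k ≤ p + 1) :
      MemSchatten 1 (phiDeltaOp ρ δ ε F p a k) := by
    have hp0 : (0 : ℝ) < p := Nat.cast_pos.2 hp
    simpa [hp0.ne'] using hasSchattenOrder_phiDeltaOp hp0 δ ε hS a hk hkp hp.ne'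
  refine ⟨htc, fun a ↦ ?_⟩
  have hsummand (k : ℕ) (hk : k ∈ Finset.Icc 1 (p + 1)) :
      hochB (p + 1) (fun b ↦ opTrace (phiDeltaOp ρ δ ε F p b k)) a = 0 := by
    obtain ⟨hk1, hkp⟩ := Finset.mem_Icc.1 hk
    have hop (b : Fin (p + 2) → M) := phiDeltaOp_eq_mul_derivationProd ρ δ ε F b hk1 hkp
    simp only [hop]
    exact hochB_opTrace_derivationProd hρ (isDerivationAlong_phiDeltaFactor F hρ hδ k) heven
      (fun b ↦ hop b ▸ htc b k hk1 hkp) a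
  calc hochB (p + 1) (phiDelta ρ δ ε F p) a
      = ∑ k ∈ Finset.Icc 1 (p + 1), (-1 : ℂ) ^ (k - 1) *
          hochB (p + 1) (fun b ↦ opTrace (phiDeltaOp ρ δ ε F p b k)) a :=
        hochB_sum_mul _ _ (fun k b ↦ opTrace (phiDeltaOp ρ δ ε F p b k)) a
    _ = 0 := Finset.sum_eq_zero fun k hk ↦ by rw [hsummand k hk, mul_zero]

/-- Let `p = 2m` be a positive even integer, `(H, ε)` ℤ₂-graded, `F² = 1`, `Fε = -εF`,
`ρ : A → B(H)` a homomorphism into even operators with `[F,ρ(a)]` `p`-Schatten, and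
`δ : A → B(H)` a linear map into even operators with `δ(ab) = ρ(a)δ(b) + δ(a)ρ(b)`.
Then the functional `φ` is well defined (each operator inside the trace is trace class)
and is a Hochschild cocycle: `bφ = 0`. -/
theorem phiDelta_hochschild_cocycle (m p : ℕ) (hm : 0 < m) (hp : p = 2 * m)
    (ε F : H →L[ℂ] H) (hε : IsSelfAdjoint ε) (hε2 : ε * ε = 1) (hF2 : F * F = 1)
    (hFε : F * ε = -(ε * F))
    (ρ : A →ₙₐ[ℂ] (H →L[ℂ] H)) (heven : ∀ a : A, ε * ρ a = ρ a * ε)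
    (hS : ∀ a : A, MemSchatten (p : ℝ) (commOp F (ρ a)))
    (δ : A →ₗ[ℂ] (H →L[ℂ] H)) (hδeven : ∀ a : A, ε * δ a = δ a * ε)
    (hLeib : ∀ a b : A, δ (a * b) = ρ a * δ b + δ a * ρ b) :
    (∀ a : Fin (p + 2) → A, ∀ k : ℕ, 1 ≤ k → k ≤ p + 1 →
      MemSchatten 1 (phiDeltaOp (⇑ρ) (⇑δ) ε F p a k)) ∧
    (∀ a : Fin (p + 3) → A, hochB (p + 1) (phiDelta (⇑ρ) (⇑δ) ε F p) a = 0) :=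
  phiDelta_hochschild_cocycle_general (by lia) ε F (map_mul ρ) heven hS hLeib
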